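/- (General hyperpfaffian minor summation formula) Let l be even, ln ≤ N, and for 1 ≤ s ≤ r let H(s) be an m-dimensional tensor of size ln×⋯×ln×N, and A an r-dimensional l-block array of size N. Then ∑_{P^(1),…,P^(r) ∈ C([N],ln)} Pf^[l,r](A_{P^(1),…,P^(r)}) ∏_{s=1}^r det^[m] H(s)_{[ln],…,[ln],P^(s)} = Pf^[l,(m-1)r](Q), where the (m−1)r-dimensional l-block array Q of size ln is given by Q(I^(1,1),…,I^(r,m-1)) = ∑_{K^(1),…,K^(r) ∈ C([N],l)} A(K^(1),…,K^(r)) ∏_{s=1}^r det^[m](H(s)_{I^(s,1),…,I^(s,m-1),K^(s)}). -/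

import Mathlib

open scoped Classical
open Finset Equiv

noncomputable section

variable {F : Type*} [Field F] [CharZero F]

/-- The hyperdeterminant `det^[m]` of an `m`-dimensional tensor of size `n`:
`∑_{σ₁,…,σ_{m-1}} sgn(σ₁⋯σ_{m-1}) ∏_i A(i, σ₁ i, …, σ_{m-1} i)`, encoded as a sum over
`m`-tuples of permutations whose `0`-th component is forced to be the identity. -/
def hyperdet (m n : ℕ) (A : (Fin m → Fin n) → F) : F :=
  ∑ σ : Fin m → Equiv.Perm (Fin n),
    if (∀ k : Fin m, k.1 = 0 → σ k = 1) then
      (∏ k, ((Equiv.Perm.sign (σ k) : ℤ) : F)) * ∏ i, A fun k => σ k i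
    else 0

/-- `blk l n j i` is the `i`-th entry of the `j`-th consecutive block of length `l` in `[l*n]`. -/
def blk (l n : ℕ) (j : Fin n) (i : Fin l) : Fin (l * n) :=
  ⟨j.1 * l + i.1, by
    have hi := i.2; have hj := j.2
    calc j.1 * l + i.1 < (j.1 + 1) * l := by rw [Nat.add_mul, Nat.one_mul]; omega
      _ ≤ n * l := Nat.mul_le_mul_right l hj
      _ = l * n := Nat.mul_comm n l⟩

/-- A permutation of `[l*n]` is block-increasing if it is increasing on each of the
`n` consecutive blocks of length `l`. -/
def BlockInc (l n : ℕ) (σ : Equiv.Perm (Fin (l * n))) : Prop :=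
  ∀ j : Fin n, StrictMono fun i : Fin l => σ (blk l n j i)

/-- The `j`-th block of `σ`, as a subset of `[l*n]`. -/
def blkSet (l n : ℕ) (σ : Equiv.Perm (Fin (l * n))) (j : Fin n) : Finset (Fin (l * n)) :=
  Finset.image (fun i => σ (blk l n j i)) Finset.univ

/-- The hyperpfaffian `Pf^[l,m]` of an `m`-dimensional `l`-block array of size `l*n`
(the `m` dimensions are indexed by an arbitrary finite type `ι`). -/
def hyperpf (l n : ℕ) {ι : Type*} [Fintype ι]
    (B : (ι → Finset (Fin (l * n))) → F) : F :=
  (n.factorial : F)⁻¹ *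
    ∑ σ : ι → Equiv.Perm (Fin (l * n)),
      if ∀ s, BlockInc l n (σ s) then
        (∏ s, ((Equiv.Perm.sign (σ s) : ℤ) : F)) *
          ∏ k : Fin n, B fun s => blkSet l n (σ s) k
      else 0

/-- The hyperhafnian `Hf^[l,m]` (same sum as the hyperpfaffian, without signs). -/
def hyperhf (l n : ℕ) {ι : Type*} [Fintype ι]
    (B : (ι → Finset (Fin (l * n))) → F) : F :=
  (n.factorial : F)⁻¹ *
    ∑ σ : ι → Equiv.Perm (Fin (l * n)),
      if ∀ s, BlockInc l n (σ s) then
        ∏ k : Fin n, B fun s => blkSet l n (σ s) k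
      else 0

/-!
Keeping one index of an array fixed while permuting the others, the hyperdeterminant of even
dimension becomes an alternating function of its rows. On the left, expand the hyperpfaffian of `A`.
A choice of sets `P s` and block-increasing permutations `ρ s` is the same as a family of increasing
sequences of length `l`, `n` of them for every `s`, whose concatenation over the `n` blocks has
distinct entries; by alternation the sign of `ρ s` turns the `s`-th hyperdeterminant into the one
whose rows follow that concatenation, and the families with a repeated entry contribute zero.
Hence the left side is a sum over all families. On the right, multiplying out the `n` values of `Q`
yields a sum over the same families, and for each of them the sum over the remaining `q r`
block-increasing permutations is the Laplace expansion of the same hyperdeterminants along blocks.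
-/

section RightInvariantSums

variable {G M : Type*} [Group G] [Fintype G] [DecidableEq G] [AddCommMonoid M]

lemma sum_ite_eq_one_of_mul_right_invariant {κ : Type*} [Fintype κ] [DecidableEq κ]
    (T : (κ → G) → M) (hT : ∀ σ ρ, T (fun k => σ k * ρ) = T σ) (a b : κ) :
    ∑ σ, (if σ a = 1 then T σ else 0) = ∑ σ, if σ b = 1 then T σ else 0 := by
  simp only [← Finset.sum_filter]
  refine Finset.sum_bij' (fun σ _ k => σ k * (σ b)⁻¹) (fun σ _ k => σ k * (σ a)⁻¹) ?_ ?_ ?_ ?_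
    fun σ _ => (hT σ _).symm
  all_goals simp +contextual

lemma sum_ite_last_eq_one {q : ℕ} (T : (Fin (q + 1) → G) → M) :
    ∑ σ, (if σ (Fin.last q) = 1 then T σ else 0) = ∑ τ : Fin q → G, T (Fin.snoc τ 1) := by
  rw [← (Fin.snocEquiv fun _ => G).sum_comp, Fintype.sum_prod_type_right]
  simp [Fin.snocEquiv]

end RightInvariantSums

section RowHyperdet

variable {R β κ : Type*} [CommRing R] [Fintype β] [DecidableEq β] [Fintype κ]

lemma sign_pow_of_odd {m : ℕ} (hm : Odd m) (τ : Perm β) : Perm.sign τ ^ m = Perm.sign τ := by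
  rw [Int.units_pow_eq_pow_mod_two, Nat.odd_iff.1 hm, pow_one]

lemma sign_pow_of_even {m : ℕ} (hm : Even m) (τ : Perm β) : Perm.sign τ ^ m = 1 := by
  rw [Int.units_pow_eq_pow_mod_two, Nat.even_iff.1 hm, pow_zero]

/-- The summand at `σ` of the hyperdeterminant of an array `g` with a distinguished row index and
further indices in the directions `κ`; only the latter are permuted. -/
def rowHyperdetTerm (g : β → (κ → β) → R) (σ : κ → Perm β) : R :=
  (∏ k, ((Perm.sign (σ k) : ℤ) : R)) * ∏ i, g i fun k => σ k i

lemma rowHyperdetTerm_comp_mul_right (g : β → (κ → β) → R) (σ : κ → Perm β) (τ : Perm β) :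
    rowHyperdetTerm (fun i => g (τ i)) (fun k => σ k * τ) =
      ((Perm.sign τ ^ Fintype.card κ : ℤˣ) : ℤ) * rowHyperdetTerm g σ := by
  have hentries : ∏ i, g (τ i) (fun k => σ k (τ i)) = ∏ i, g i fun k => σ k i :=
    Equiv.prod_comp τ fun i => g i fun k => σ k i
  simp only [rowHyperdetTerm, Perm.sign_mul, Perm.mul_apply, hentries, Units.val_mul,
    Int.cast_mul, prod_mul_distrib, prod_const, card_univ, Units.val_pow_eq_pow_val, Int.cast_pow]
  ring

variable [DecidableEq κ]

/-- The hyperdeterminant of an array with a distinguished row index, normalised by keeping the row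
index fixed. For an odd number of directions `κ` it is an alternating function of the rows `g i`. -/
def rowHyperdet (g : β → (κ → β) → R) : R :=
  ∑ σ : κ → Perm β, rowHyperdetTerm g σ

lemma rowHyperdet_comp_perm (hκ : Odd (Fintype.card κ)) (g : β → (κ → β) → R) (τ : Perm β) :
    rowHyperdet (fun i => g (τ i)) = ((Perm.sign τ : ℤ) : R) * rowHyperdet g := by
  simp only [rowHyperdet, mul_sum]
  refine (Fintype.sum_equiv (Equiv.piCongrRight fun _ => Equiv.mulRight τ) _ _ fun σ => ?_).symm
  exact (sign_pow_of_odd hκ τ ▸ rowHyperdetTerm_comp_mul_right g σ τ).symm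

-- Pairing `σ` with `σ * swap a b` avoids dividing by `2`, so that `R` may have characteristic two.
lemma rowHyperdet_eq_zero_of_rows_eq (hκ : Odd (Fintype.card κ)) (g : β → (κ → β) → R) {a b : β}
    (hab : a ≠ b) (hg : g a = g b) : rowHyperdet g = 0 := by
  have hswap : (fun i => g (swap a b i)) = g := by
    funext i
    rw [swap_apply_def]
    split_ifs <;> simp_all
  have hneg (σ : κ → Perm β) :
      rowHyperdetTerm g (fun k => σ k * swap a b) = -rowHyperdetTerm g σ := by
    have h := rowHyperdetTerm_comp_mul_right g σ (swap a b)
    rw [hswap, sign_pow_of_odd hκ, Perm.sign_swap hab] at h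
    simpa using h
  obtain ⟨k₀⟩ := Fintype.card_pos_iff.1 hκ.pos
  refine Finset.sum_involution (fun σ _ k => σ k * swap a b) (fun σ _ => ?_) (fun σ _ _ h => ?_)
    (fun _ _ => mem_univ _) (fun σ _ => ?_)
  · rw [hneg, add_neg_cancel]
  · exact hab (swap_eq_one_iff.1 (mul_eq_left.1 (congrFun h k₀)))
  · simp [mul_assoc]

lemma hyperdet_eq_rowHyperdet {𝕜 : Type*} [Field 𝕜] {q L : ℕ} (hq : Even (q + 1))
    (g : Fin L → (Fin q → Fin L) → 𝕜) :
    hyperdet (q + 1) L (fun a => g (a (Fin.last q)) fun k => a k.castSucc) = rowHyperdet g := by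
  let T : (Fin (q + 1) → Perm (Fin L)) → 𝕜 :=
    rowHyperdetTerm fun _ a => g (a (Fin.last q)) fun k => a k.castSucc
  have hT (σ : Fin (q + 1) → Perm (Fin L)) (ρ : Perm (Fin L)) : T (fun k => σ k * ρ) = T σ := by
    simpa [sign_pow_of_even hq] using rowHyperdetTerm_comp_mul_right
      (fun _ a => g (a (Fin.last q)) fun k => a k.castSucc) σ ρ
  have hzero (σ : Fin (q + 1) → Perm (Fin L)) : (∀ k : Fin (q + 1), k.1 = 0 → σ k = 1) ↔ σ 0 = 1 :=
    ⟨fun h => h 0 rfl, fun h k hk => (Fin.ext hk : k = 0) ▸ h⟩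
  calc hyperdet (q + 1) L (fun a => g (a (Fin.last q)) fun k => a k.castSucc)
      = ∑ σ, if σ 0 = 1 then T σ else 0 := by
        simp only [hyperdet, hzero, T, rowHyperdetTerm]
    _ = ∑ σ, if σ (Fin.last q) = 1 then T σ else 0 :=
        sum_ite_eq_one_of_mul_right_invariant T hT _ _
    _ = rowHyperdet g := by
        rw [sum_ite_last_eq_one]
        simp [rowHyperdet, rowHyperdetTerm, T, Fin.prod_univ_castSucc]

end RowHyperdet

section OrderEmbeddings

variable {α : Type*} [LinearOrder α] {k : ℕ}

lemma exists_orderEmb_comp_perm_eq {f : Fin k → α} (hf : Function.Injective f) :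
    ∃ (e : Fin k ↪o α) (σ : Perm (Fin k)), e ∘ σ = f := by
  have hmono : StrictMono (f ∘ Tuple.sort f) :=
    (Tuple.monotone_sort f).strictMono_of_injective (hf.comp (Tuple.sort f).injective)
  exact ⟨OrderEmbedding.ofStrictMono _ hmono, (Tuple.sort f)⁻¹, by ext; simp⟩

lemma orderEmb_comp_perm_inj {e e' : Fin k ↪o α} {σ σ' : Perm (Fin k)}
    (h : e ∘ σ = e' ∘ σ') : e = e' ∧ σ = σ' := by
  have hrange : Set.range e = Set.range e' := by
    rw [← σ.surjective.range_comp e, h, σ'.surjective.range_comp]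
  obtain rfl : e = e' := DFunLike.coe_injective ((e.strictMono.range_inj e'.strictMono).1 hrange)
  exact ⟨rfl, Equiv.ext fun i => e.injective (congrFun h i)⟩

lemma orderEmbOfFin_map_univ (e : Fin k ↪o α) (h : (univ.map e.toEmbedding).card = k) :
    (univ.map e.toEmbedding).orderEmbOfFin h = e :=
  (orderEmbOfFin_unique' h fun i => mem_map_of_mem _ (mem_univ i)).symm

instance instFintypeFinOrderEmbedding [Fintype α] : Fintype (Fin k ↪o α) :=
  FunLike.fintype _

lemma sum_dite_card_eq_sum_orderEmb {ι M : Type*} [Fintype ι] [DecidableEq ι] [Fintype α]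
    [AddCommMonoid M] (f : (P : ι → Finset α) → (∀ s, (P s).card = k) → M)
    (g : (ι → Fin k ↪o α) → M)
    (hfg : ∀ P hP, f P hP = g fun s => (P s).orderEmbOfFin (hP s)) :
    ∑ P : ι → Finset α, (if hP : ∀ s, (P s).card = k then f P hP else 0) = ∑ e, g e := by
  have hmap : Function.Injective fun (e : Fin k ↪o α) => univ.map e.toEmbedding := fun e e' h => by
    simp only at h
    rw [← orderEmbOfFin_map_univ e (by simp), ← orderEmbOfFin_map_univ e' (by simp)]
    simp only [h]
  refine (Fintype.sum_of_injective (fun e s => univ.map (e s).toEmbedding)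
    hmap.comp_left _ _ (fun P hP => ?_) fun e => ?_).symm
  · refine dif_neg fun hcard => hP ⟨fun s => (P s).orderEmbOfFin (hcard s), ?_⟩
    simp only [map_orderEmbOfFin_univ]
  · rw [dif_pos fun s => by simp, hfg]
    simp only [orderEmbOfFin_map_univ]

end OrderEmbeddings

section Blocks

variable {α : Type*} {l n : ℕ}

/-- The decomposition of `[l * n]` into `n` consecutive blocks of length `l`, as an equivalence. -/
def blkEquiv (l n : ℕ) : Fin n × Fin l ≃ Fin (l * n) :=
  finProdFinEquiv.trans (finCongr (Nat.mul_comm n l))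

lemma blkEquiv_apply (j : Fin n) (i : Fin l) : blkEquiv l n (j, i) = blk l n j i :=
  Fin.ext (by simp [blkEquiv, blk, finProdFinEquiv, Nat.add_comm, Nat.mul_comm])

lemma blkEquiv_symm_blk (j : Fin n) (i : Fin l) : (blkEquiv l n).symm (blk l n j i) = (j, i) := by
  rw [← blkEquiv_apply, symm_apply_apply]

lemma blk_injective (j : Fin n) : Function.Injective (blk l n j) := fun i i' h => by
  simpa [← blkEquiv_apply] using h

lemma funext_blk {f g : Fin (l * n) → α} (h : ∀ j i, f (blk l n j i) = g (blk l n j i)) :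
    f = g := by
  funext x
  obtain ⟨⟨j, i⟩, rfl⟩ := (blkEquiv l n).surjective x
  simpa only [blkEquiv_apply] using h j i

lemma prod_eq_prod_prod_blk {M : Type*} [CommMonoid M] (g : Fin (l * n) → M) :
    ∏ x, g x = ∏ j, ∏ i, g (blk l n j i) := by
  simp only [← (blkEquiv l n).prod_comp, Fintype.prod_prod_type, blkEquiv_apply]

/-- The permutation of `[l * n]` that permutes the `j`-th block by `π j`. -/
def blockDiagPerm (π : Fin n → Perm (Fin l)) : Perm (Fin (l * n)) :=
  (blkEquiv l n).permCongr (prodCongrRight π)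

lemma blockDiagPerm_blk (π : Fin n → Perm (Fin l)) (j : Fin n) (i : Fin l) :
    blockDiagPerm π (blk l n j i) = blk l n j (π j i) := by
  simp [blockDiagPerm, permCongr_apply, blkEquiv_symm_blk, blkEquiv_apply]

lemma sign_blockDiagPerm (π : Fin n → Perm (Fin l)) :
    Perm.sign (blockDiagPerm π) = ∏ j, Perm.sign (π j) := by
  rw [blockDiagPerm, Perm.sign_permCongr, Perm.sign_prodCongrRight]

/-- The block-increasing permutations of `[l * n]`. -/
abbrev BlockIncPerm (l n : ℕ) : Type := {ρ : Perm (Fin (l * n)) // BlockInc l n ρ}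

/-- The increasing enumeration `i ↦ ρ (blk l n j i)` of the `j`-th block of a block-increasing
permutation `ρ`. -/
def blockEmb (ρ : BlockIncPerm l n) (j : Fin n) : Fin l ↪o Fin (l * n) :=
  OrderEmbedding.ofStrictMono _ (ρ.2 j)

lemma blockEmb_apply (ρ : BlockIncPerm l n) (j : Fin n) (i : Fin l) :
    blockEmb ρ j i = ρ.1 (blk l n j i) := rfl

lemma blkSet_eq_map_blockEmb (ρ : BlockIncPerm l n) (j : Fin n) :
    blkSet l n ρ.1 j = univ.map (blockEmb ρ j).toEmbedding := by
  rw [map_eq_image]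
  rfl

lemma bijective_blockInc_mul_blockDiagPerm : Function.Bijective
    fun x : BlockIncPerm l n × (Fin n → Perm (Fin l)) => x.1.1 * blockDiagPerm x.2 := by
  constructor
  · rintro ⟨ρ, π⟩ ⟨ρ', π'⟩ h
    have hblock (j : Fin n) : blockEmb ρ j = blockEmb ρ' j ∧ π j = π' j :=
      orderEmb_comp_perm_inj <| funext fun i => by
        simpa [blockDiagPerm_blk, blockEmb_apply] using DFunLike.congr_fun h (blk l n j i)
    have hρ : ρ = ρ' := Subtype.ext <| DFunLike.coe_injective <| funext_blk fun j i =>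
      DFunLike.congr_fun (hblock j).1 i
    exact Prod.ext hρ (funext fun j => (hblock j).2)
  · intro σ
    choose e π heπ using fun j => exists_orderEmb_comp_perm_eq
      (σ.injective.comp (blk_injective (l := l) (n := n) j))
    have hσ (j : Fin n) (i : Fin l) : σ (blk l n j i) = e j (π j i) := (congrFun (heπ j) i).symm
    have hinc : BlockInc l n (σ * blockDiagPerm fun j => (π j)⁻¹) := fun j => by
      simpa [blockDiagPerm_blk, hσ] using (e j).strictMono
    refine ⟨(⟨_, hinc⟩, π), DFunLike.coe_injective <| funext_blk fun j i => ?_⟩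
    simp [blockDiagPerm_blk]

/-- The sequence of length `l * n` whose `j`-th block is `e j`. -/
def joinBlocks (e : Fin n → Fin l → α) (x : Fin (l * n)) : α :=
  e ((blkEquiv l n).symm x).1 ((blkEquiv l n).symm x).2

lemma joinBlocks_blk (e : Fin n → Fin l → α) (j : Fin n) (i : Fin l) :
    joinBlocks e (blk l n j i) = e j i := by
  rw [joinBlocks, blkEquiv_symm_blk]

end Blocks

section BlockEmbeddings

variable {α : Type*} [LinearOrder α] {l n : ℕ}

lemma joinBlocks_blockEmb_trans (P : Fin (l * n) ↪o α) (ρ : BlockIncPerm l n) :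
    joinBlocks (fun j => (blockEmb ρ j).trans P) = P ∘ ρ.1 :=
  funext_blk fun j i => joinBlocks_blk _ j i

lemma blockEmb_trans_inj {P P' : Fin (l * n) ↪o α} {ρ ρ' : BlockIncPerm l n}
    (h : ∀ j, (blockEmb ρ j).trans P = (blockEmb ρ' j).trans P') : P = P' ∧ ρ = ρ' := by
  have hcomp : P ∘ ρ.1 = P' ∘ ρ'.1 := by
    simp only [← joinBlocks_blockEmb_trans, h]
  exact (orderEmb_comp_perm_inj hcomp).imp_right Subtype.ext

lemma exists_blockEmb_trans_eq {e : Fin n → Fin l ↪o α}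
    (he : Function.Injective (joinBlocks fun j => e j)) :
    ∃ (P : Fin (l * n) ↪o α) (ρ : BlockIncPerm l n), (fun j => (blockEmb ρ j).trans P) = e := by
  obtain ⟨P, ρ, hPρ⟩ := exists_orderEmb_comp_perm_eq he
  have hblk (j : Fin n) (i : Fin l) : P (ρ (blk l n j i)) = e j i := by
    rw [← joinBlocks_blk (fun j => e j) j i, ← hPρ, Function.comp_apply]
  have hinc : BlockInc l n ρ := fun j i i' hi => by
    rw [← P.lt_iff_lt, hblk, hblk]
    exact (e j).strictMono hi
  exact ⟨P, ⟨ρ, hinc⟩, funext fun j => RelEmbedding.ext fun i => hblk j i⟩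

end BlockEmbeddings

section MinorSummation

variable {R ι κ α : Type*} [CommRing R] [Fintype ι] [DecidableEq ι] [Fintype κ] [DecidableEq κ]
  [LinearOrder α] {l n : ℕ}

-- Laplace expansion along the blocks: sort every `σ k` into a block-increasing permutation times a
-- permutation inside the blocks, whose sum factors over the blocks.
lemma rowHyperdet_eq_sum_prod_blocks (g : Fin (l * n) → (κ → Fin (l * n)) → R) :
    rowHyperdet g = ∑ ρ : κ → BlockIncPerm l n, (∏ k, ((Perm.sign (ρ k).1 : ℤ) : R)) *
      ∏ j, rowHyperdet fun i a => g (blk l n j i) fun k => blockEmb (ρ k) j (a k) := by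
  let factorization : (κ → BlockIncPerm l n) × (Fin n → κ → Perm (Fin l)) ≃
      (κ → Perm (Fin (l * n))) :=
    ((Equiv.refl _).prodCongr (piComm _)).trans <| (arrowProdEquivProdArrow _ _ _).symm.trans <|
      piCongrRight fun _ => ofBijective _ bijective_blockInc_mul_blockDiagPerm
  have hfactorization (ρ : κ → BlockIncPerm l n) (π : Fin n → κ → Perm (Fin l)) :
      factorization (ρ, π) = fun k => (ρ k).1 * blockDiagPerm fun j => π j k := rfl
  simp only [rowHyperdet, prod_univ_sum, Fintype.piFinset_univ, mul_sum]
  rw [← factorization.sum_comp, Fintype.sum_prod_type]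
  refine sum_congr rfl fun ρ _ => sum_congr rfl fun π _ => ?_
  simp only [hfactorization, rowHyperdetTerm, prod_eq_prod_prod_blk (l := l) (n := n),
    Perm.sign_mul, sign_blockDiagPerm, Units.val_mul, Int.cast_mul, Units.coe_prod, Int.cast_prod,
    prod_mul_distrib, Perm.mul_apply, blockDiagPerm_blk, blockEmb_apply, mul_assoc]
  rw [prod_comm (s := (univ : Finset κ))]

/-- The hyperpfaffian multiplied by `n!`, for an array indexed by increasing sequences of length `l`
instead of `l`-element sets; being free of denominators it makes sense over any commutative ring. -/
def hyperpfSum (B : (ι → Fin l ↪o Fin (l * n)) → R) : R :=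
  ∑ ρ : ι → BlockIncPerm l n,
    (∏ s, ((Perm.sign (ρ s).1 : ℤ) : R)) * ∏ j, B fun s => blockEmb (ρ s) j

lemma factorial_mul_hyperpf {𝕜 : Type*} [Field 𝕜] (hn : (n.factorial : 𝕜) ≠ 0)
    (B : (ι → Finset (Fin (l * n))) → 𝕜) :
    n.factorial * hyperpf l n B = hyperpfSum fun e => B fun s => univ.map (e s).toEmbedding := by
  rw [hyperpf, mul_inv_cancel_left₀ hn, hyperpfSum]
  refine (sum_of_injOn (fun ρ s => (ρ s).1) Subtype.val_injective.comp_left.injOn (by simp)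
    (fun σ _ hσ => if_neg fun h => hσ ⟨fun s => ⟨σ s, h s⟩, by simp⟩) fun ρ _ => ?_).symm
  simp only [if_pos fun s => (ρ s).2, blkSet_eq_map_blockEmb]

/-- The common summand of both sides of the minor summation formula, at a family `e` of `n`
increasing sequences of length `l` for every `s`. -/
def blockFamilyTerm (H : ι → α → (κ → Fin (l * n)) → R) (A : (ι → Fin l ↪o α) → R)
    (e : ι → Fin n → Fin l ↪o α) : R :=
  (∏ j, A fun s => e s j) * ∏ s, rowHyperdet fun x => H s (joinBlocks (fun j => e s j) x)

lemma hyperpfSum_mul_prod_rowHyperdet (hκ : Odd (Fintype.card κ))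
    (H : ι → α → (κ → Fin (l * n)) → R) (A : (ι → Fin l ↪o α) → R)
    (P : ι → Fin (l * n) ↪o α) :
    hyperpfSum (fun e => A fun s => (e s).trans (P s)) * ∏ s, rowHyperdet (fun x => H s (P s x)) =
      ∑ ρ : ι → BlockIncPerm l n,
        blockFamilyTerm H A fun s j => (blockEmb (ρ s) j).trans (P s) := by
  rw [hyperpfSum, sum_mul]
  refine sum_congr rfl fun ρ _ => ?_
  have hdet (s : ι) := rowHyperdet_comp_perm hκ (fun x => H s (P s x)) (ρ s).1
  simp only [blockFamilyTerm, joinBlocks_blockEmb_trans, Function.comp_apply, hdet,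
    prod_mul_distrib]
  ring

variable [Fintype α]

-- Families of this form are those without repeated entries; on the others the term vanishes.
lemma sum_sum_blockFamilyTerm_trans (hκ : Odd (Fintype.card κ))
    (H : ι → α → (κ → Fin (l * n)) → R) (A : (ι → Fin l ↪o α) → R) :
    ∑ P : ι → Fin (l * n) ↪o α, ∑ ρ : ι → BlockIncPerm l n,
        blockFamilyTerm H A (fun s j => (blockEmb (ρ s) j).trans (P s)) =
      ∑ e, blockFamilyTerm H A e := by
  rw [← Fintype.sum_prod_type']
  refine Fintype.sum_of_injective (fun x s j => (blockEmb (x.2 s) j).trans (x.1 s)) ?_ _ _ ?_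
    fun _ => rfl
  · intro x y hxy
    have h (s : ι) := blockEmb_trans_inj (congrFun (congrFun hxy s))
    exact Prod.ext (funext fun s => (h s).1) (funext fun s => (h s).2)
  · intro e he
    obtain ⟨s, hs⟩ : ∃ s, ¬ Function.Injective (joinBlocks fun j => e s j) := by
      by_contra! hinj
      choose P ρ hPρ using fun s => exists_blockEmb_trans_eq (hinj s)
      exact he ⟨(P, ρ), funext hPρ⟩
    obtain ⟨x, y, hxy, hne⟩ := Function.not_injective_iff.1 hs
    have hzero : rowHyperdet (fun x => H s (joinBlocks (fun j => e s j) x)) = 0 :=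
      rowHyperdet_eq_zero_of_rows_eq hκ _ hne (congrArg (H s) hxy)
    rw [blockFamilyTerm, prod_eq_zero (mem_univ s) hzero, mul_zero]

lemma hyperpfSum_sum_mul_prod_rowHyperdet
    (H : ι → α → (κ → Fin (l * n)) → R) (A : (ι → Fin l ↪o α) → R) :
    hyperpfSum (fun I : ι × κ → Fin l ↪o Fin (l * n) => ∑ K : ι → Fin l ↪o α,
        A K * ∏ s, rowHyperdet fun i a => H s (K s i) fun k => I (s, k) (a k)) =
      ∑ e, blockFamilyTerm H A e := by
  simp only [hyperpfSum, prod_univ_sum, Fintype.piFinset_univ, mul_sum]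
  rw [sum_comm]
  refine Fintype.sum_equiv (piComm _) _ _ fun e => ?_
  simp only [piComm_apply, blockFamilyTerm, rowHyperdet_eq_sum_prod_blocks, joinBlocks_blk,
    prod_univ_sum, Fintype.piFinset_univ, mul_sum]
  refine Fintype.sum_equiv (curry _ _ _) _ _ fun ρ => ?_
  simp only [prod_mul_distrib, Fintype.prod_prod_type, curry_apply, Function.curry]
  rw [prod_comm (s := (univ : Finset (Fin n)))]
  ring

theorem sum_hyperpfSum_mul_prod_rowHyperdet (hκ : Odd (Fintype.card κ))
    (H : ι → α → (κ → Fin (l * n)) → R) (A : (ι → Fin l ↪o α) → R) :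
    ∑ P : ι → Fin (l * n) ↪o α, hyperpfSum (fun e => A fun s => (e s).trans (P s)) *
        ∏ s, rowHyperdet (fun x => H s (P s x)) =
      hyperpfSum fun I : ι × κ → Fin l ↪o Fin (l * n) => ∑ K : ι → Fin l ↪o α,
        A K * ∏ s, rowHyperdet fun i a => H s (K s i) fun k => I (s, k) (a k) := by
  simp only [hyperpfSum_mul_prod_rowHyperdet hκ, sum_sum_blockFamilyTerm_trans hκ,
    hyperpfSum_sum_mul_prod_rowHyperdet]

end MinorSummation

theorem hyperpf_minor_summation_general {𝕜 ι α : Type*} [Field 𝕜] [Fintype ι] [DecidableEq ι]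
    [Fintype α] [LinearOrder α] {l q n : ℕ} (hn : (n.factorial : 𝕜) ≠ 0) (hm : Even (q + 1))
    (H : ι → (Fin q → Fin (l * n)) → α → 𝕜) (A : (ι → Finset α) → 𝕜)
    (Q : (ι × Fin q → Finset (Fin (l * n))) → 𝕜)
    (hQ : ∀ Iv : ι × Fin q → Finset (Fin (l * n)), ∀ hIv : ∀ p, (Iv p).card = l,
      Q Iv = ∑ K : ι → Finset α,
        if hK : ∀ s, (K s).card = l then
          A K * ∏ s, hyperdet (q + 1) l fun a =>
            H s (fun k => (Iv (s, k)).orderEmbOfFin (hIv (s, k)) (a k.castSucc))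
              ((K s).orderEmbOfFin (hK s) (a (Fin.last q)))
        else 0) :
    (∑ P : ι → Finset α,
        if hP : ∀ s, (P s).card = l * n then
          hyperpf l n (fun I => A fun s => (I s).map ((P s).orderEmbOfFin (hP s)).toEmbedding) *
            ∏ s, hyperdet (q + 1) (l * n) fun a =>
              H s (fun k => a k.castSucc) ((P s).orderEmbOfFin (hP s) (a (Fin.last q)))
        else 0)
      = hyperpf l n Q := by
  have hQ_orderEmb (I : ι × Fin q → Fin l ↪o Fin (l * n)) :
      Q (fun p => univ.map (I p).toEmbedding) = ∑ K : ι → Fin l ↪o α,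
        A (fun s => univ.map (K s).toEmbedding) *
          ∏ s, rowHyperdet fun i a => H s (fun k => I (s, k) (a k)) (K s i) := by
    rw [hQ _ fun p => by simp]
    refine sum_dite_card_eq_sum_orderEmb _ _ fun P hP => ?_
    simp only [orderEmbOfFin_map_univ, map_orderEmbOfFin_univ, ← hyperdet_eq_rowHyperdet hm]
  have hcard : Odd (Fintype.card (Fin q)) := by
    simpa [Nat.even_add_one] using hm
  refine mul_left_cancel₀ hn ?_
  rw [factorial_mul_hyperpf hn, funext hQ_orderEmb, ← sum_hyperpfSum_mul_prod_rowHyperdet hcard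
    (fun s x a => H s a x) fun K => A fun s => univ.map (K s).toEmbedding, mul_sum]
  simp only [mul_dite, mul_zero]
  refine sum_dite_card_eq_sum_orderEmb _ _ fun P hP => ?_
  rw [← mul_assoc, factorial_mul_hyperpf hn]
  simp only [← hyperdet_eq_rowHyperdet hm, map_map]
  rfl

/-- General hyperpfaffian minor summation formula (here `m = q+1`). -/
theorem hyperpf_minor_summation (l q r n N : ℕ) (hl : Even l) (hl0 : 0 < l)
    (hm : Even (q + 1)) (hr : 0 < r) (hn : 0 < n) (hN : l * n ≤ N)
    (H : Fin r → (Fin q → Fin (l * n)) → Fin N → F)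
    (A : (Fin r → Finset (Fin N)) → F)
    (Q : (Fin r × Fin q → Finset (Fin (l * n))) → F)
    (hQ : ∀ Iv : Fin r × Fin q → Finset (Fin (l * n)),
      ∀ hIv : ∀ p, (Iv p).card = l,
      Q Iv = ∑ K : Fin r → Finset (Fin N),
        if hK : ∀ s, (K s).card = l then
          A K * ∏ s : Fin r,
            hyperdet (q + 1) l (fun a : Fin (q + 1) → Fin l =>
              H s (fun k : Fin q => (Iv (s, k)).orderEmbOfFin (hIv (s, k)) (a k.castSucc))
                ((K s).orderEmbOfFin (hK s) (a (Fin.last q))))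
        else 0) :
    (∑ P : Fin r → Finset (Fin N),
        if hP : ∀ s, (P s).card = l * n then
          hyperpf l n (fun I : Fin r → Finset (Fin (l * n)) =>
              A fun s => (I s).map ((P s).orderEmbOfFin (hP s)).toEmbedding) *
            ∏ s : Fin r,
              hyperdet (q + 1) (l * n) (fun a : Fin (q + 1) → Fin (l * n) =>
                H s (fun k => a k.castSucc) ((P s).orderEmbOfFin (hP s) (a (Fin.last q))))
        else 0)
    = hyperpf l n Q := by
  -- Only the `Decidable` instances differ.
  convert hyperpf_minor_summation_general (Nat.cast_ne_zero.2 n.factorial_ne_zero) hm H A Q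
    (by convert hQ)
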